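/- (Harish-Chandra/Itzykson–Zuber formula.) Let d ≥ 1, let z ∈ ℂ with z ≠ 0, and let A and B be normal d×d complex matrices whose eigenvalues a_1,…,a_d and b_1,…,b_d (each listed with multiplicity, in some fixed order) are pairwise distinct. Then ∫_{U(d)} exp( z · tr(A U^* B U) ) dμ(U) = ( ∏_{j=1}^{d-1} j! ) · det( ( exp(z·a_j·b_k) )_{j,k=1}^d ) / ( z^{(d²-d)/2} · Δ(A) · Δ(B) ), where Δ(A) = ∏_{j>k}(a_j - a_k) and Δ(B) = ∏_{j>k}(b_j - b_k). -/

import Mathlib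

open MeasureTheory Matrix

/-- The Vandermonde product `Δ(a₁,…,a_d) = ∏_{j>k} (a_j - a_k)`. -/
noncomputable def vandermondeProd {d : ℕ} (a : Fin d → ℂ) : ℂ :=
  ∏ p ∈ Finset.univ.filter (fun p : Fin d × Fin d => p.2 < p.1), (a p.1 - a p.2)

/-!
Let `M = U A U*` and `Φ(b) = 𝔼 exp(∑ i, b i * M i i)`, which is the integral for `B = diag b` and
`z = 1`. The law of `M` is invariant under conjugation by unitary matrices; as the skew-Hermitian
matrices span `gl_d(ℂ)` over `ℂ`, it is infinitesimally invariant under all of `gl_d(ℂ)`.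
Conjugation by `1 + ε E i j` thus expresses expectations of minors of `M - c` times off-diagonal
entries as divided differences in `b`, and an induction on the size of the minors gives
`∏ i, (∂ i - c) (Δ(b) Φ(b)) = Δ(b) 𝔼 (det (M - c) exp(∑ i, b i * M i i))`.
The right-hand side vanishes for every eigenvalue `c = a j`, so `Δ Φ` is a combination of the
exponentials `exp(∑ i, a (σ i) * b i)`. Being antisymmetric in `b`, it is a multiple of
`det (exp(a j * b k))`, and the behaviour as `b → 0` identifies the constant.
-/

open scoped ContDiff

section AnalyticFunctions

variable (𝕜 E : Type*) [NontriviallyNormedField 𝕜] [NormedAddCommGroup E] [NormedSpace 𝕜 E]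

/-- The algebra of analytic scalar functions on a normed space, analyticity being
expressed as `ContDiff 𝕜 ω`. -/
def analyticFunctions : Subalgebra 𝕜 (E → 𝕜) where
  carrier := {F | ContDiff 𝕜 ω F}
  mul_mem' {F G} (hF : ContDiff 𝕜 ω F) (hG : ContDiff 𝕜 ω G) := hF.mul hG
  add_mem' {F G} (hF : ContDiff 𝕜 ω F) (hG : ContDiff 𝕜 ω G) := hF.add hG
  algebraMap_mem' c := (contDiff_const : ContDiff 𝕜 ω fun _ : E => c)

variable {𝕜 E}

theorem contDiff_analyticFunctions (F : analyticFunctions 𝕜 E) : ContDiff 𝕜 ω F.1 := F.2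

theorem differentiable_analyticFunctions (F : analyticFunctions 𝕜 E) : Differentiable 𝕜 F.1 :=
  (contDiff_analyticFunctions F).differentiable (by simp)

variable (𝕜) in
/-- The derivative in the direction `v`, as a derivation of the algebra of analytic functions. -/
noncomputable def dirDeriv (v : E) : Derivation 𝕜 (analyticFunctions 𝕜 E) (analyticFunctions 𝕜 E) :=
  Derivation.mk'
    { toFun F := ⟨fun x => fderiv 𝕜 F.1 x v,
        ((contDiff_analyticFunctions F).fderiv_right (m := ω) (by simp)).clm_apply contDiff_const⟩
      map_add' F G := Subtype.ext <| funext fun x => congrArg (· v) <|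
        fderiv_add (differentiable_analyticFunctions F x) (differentiable_analyticFunctions G x)
      map_smul' c F := Subtype.ext <| funext fun x => congrArg (· v) <|
        fderiv_const_smul (differentiable_analyticFunctions F x) c }
    fun F G => Subtype.ext <| funext fun x => congrArg (· v) <|
      fderiv_mul (differentiable_analyticFunctions F x) (differentiable_analyticFunctions G x)

theorem dirDeriv_apply (v : E) (F : analyticFunctions 𝕜 E) (x : E) :
    (dirDeriv 𝕜 v F).1 x = lineDeriv 𝕜 F.1 x v :=
  (differentiable_analyticFunctions F x).lineDeriv_eq_fderiv.symm

theorem dirDeriv_eq_zero_of_forall_add_smul_eq {v : E} {F : analyticFunctions 𝕜 E}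
    (h : ∀ (x : E) (ε : 𝕜), F.1 (x + ε • v) = F.1 x) : dirDeriv 𝕜 v F = 0 := by
  ext x
  simp [dirDeriv_apply, lineDeriv, h]

end AnalyticFunctions

section ConstantCoefficientOperators

variable {𝕜 E : Type*} [NontriviallyNormedField 𝕜] [NormedAddCommGroup E] [NormedSpace 𝕜 E]

theorem dirDeriv_comm (v w : E) (F : analyticFunctions 𝕜 E) :
    dirDeriv 𝕜 v (dirDeriv 𝕜 w F) = dirDeriv 𝕜 w (dirDeriv 𝕜 v F) := by
  ext x
  have hF := contDiff_analyticFunctions F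
  have hF' : DifferentiableAt 𝕜 (fderiv 𝕜 F.1) x :=
    (hF.fderiv_right (m := ω) (by simp)).differentiable (by simp) x
  have second_deriv (v w : E) :
      (dirDeriv 𝕜 v (dirDeriv 𝕜 w F)).1 x = fderiv 𝕜 (fderiv 𝕜 F.1) x v w := by
    change fderiv 𝕜 (fun y => fderiv 𝕜 F.1 y w) x v = _
    rw [fderiv_clm_apply hF' (by fun_prop)]
    simp
  have symm : IsSymmSndFDerivAt 𝕜 F.1 x :=
    hF.contDiffAt.isSymmSndFDerivAt le_top
  exact (second_deriv v w).trans ((symm v w).trans (second_deriv w v).symm)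

variable (𝕜 E) in
/-- The commutative algebra of linear differential operators with constant coefficients. -/
def constCoeffOps : Subalgebra 𝕜 (Module.End 𝕜 (analyticFunctions 𝕜 E)) :=
  Algebra.adjoin 𝕜 (Set.range fun v : E => (dirDeriv 𝕜 v : Module.End 𝕜 (analyticFunctions 𝕜 E)))

instance : IsMulCommutative (constCoeffOps 𝕜 E) :=
  Algebra.isMulCommutative_adjoin 𝕜 <| by
    rintro _ ⟨v, rfl⟩ _ ⟨w, rfl⟩
    exact LinearMap.ext (dirDeriv_comm v w)

noncomputable instance : CommRing (constCoeffOps 𝕜 E) :=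
  { Algebra.semiringToRing 𝕜 with mul_comm := mul_comm' }

noncomputable instance : Module (constCoeffOps 𝕜 E) (analyticFunctions 𝕜 E) :=
  (constCoeffOps 𝕜 E).moduleLeft

instance : IsScalarTower 𝕜 (constCoeffOps 𝕜 E) (analyticFunctions 𝕜 E) :=
  ⟨fun _ _ _ => rfl⟩

variable (𝕜) in
/-- The directional derivative as an element of the algebra of constant-coefficient operators. -/
noncomputable def dirDerivOp (v : E) : constCoeffOps 𝕜 E :=
  ⟨dirDeriv 𝕜 v, Algebra.subset_adjoin ⟨v, rfl⟩⟩

theorem dirDerivOp_smul (v : E) (F : analyticFunctions 𝕜 E) :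
    dirDerivOp 𝕜 v • F = dirDeriv 𝕜 v F := rfl

theorem prod_dirDerivOp_smul_mul {κ : Type*} (T : Finset κ) {v : κ → E} {c : κ → 𝕜}
    {G : analyticFunctions 𝕜 E} (hG : ∀ k ∈ T, dirDeriv 𝕜 (v k) G = c k • G)
    (F : analyticFunctions 𝕜 E) :
    (∏ k ∈ T, dirDerivOp 𝕜 (v k)) • (G * F) =
      G * (∏ k ∈ T, (dirDerivOp 𝕜 (v k) + algebraMap 𝕜 _ (c k))) • F := by
  classical
  induction T using Finset.induction_on with
  | empty => simp
  | insert k T hk ih =>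
    rw [Finset.prod_insert hk, Finset.prod_insert hk, mul_smul, mul_smul,
      ih fun l hl => hG l (Finset.mem_insert_of_mem hl), dirDerivOp_smul, Derivation.leibniz,
      hG k (Finset.mem_insert_self k T), add_smul, dirDerivOp_smul, algebraMap_smul, smul_eq_mul,
      smul_eq_mul, mul_add, mul_smul_comm, mul_smul_comm, mul_comm _ G]

end ConstantCoefficientOperators

section LaplaceTransform

variable {ι 𝔸 : Type*} [Fintype ι] [NormedCommRing 𝔸] [NormedAlgebra ℂ 𝔸] [CompleteSpace 𝔸]

theorem hasDerivAt_exp_add_smul (x y : 𝔸) :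
    HasDerivAt (fun ε : ℂ => NormedSpace.exp (x + ε • y)) (NormedSpace.exp x * y) 0 := by
  have h : HasDerivAt (fun ε : ℂ => x + ε • y) y 0 := by
    simpa using ((hasDerivAt_id (0 : ℂ)).smul_const y).const_add x
  have hexp : HasFDerivAt NormedSpace.exp _ (x + (0 : ℂ) • y) := hasFDerivAt_exp (𝕂 := ℂ)
  refine (hexp.comp_hasDerivAt 0 h).congr_deriv ?_
  simp

theorem contDiff_exp_sum_smul (φ : ι → 𝔸) :
    ContDiff ℂ ω fun b : ι → ℂ => NormedSpace.exp (∑ i, b i • φ i) := by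
  have exp_contDiff : ContDiff ℂ ω (NormedSpace.exp : 𝔸 → 𝔸) :=
    contDiff_iff_contDiffAt.2 fun x => (NormedSpace.exp_analytic x).contDiffAt
  exact exp_contDiff.comp (by fun_prop)

/-- The Laplace transform `b ↦ Λ (f * exp (∑ i, b i • φ i))` of `f`. If `𝔸` is an algebra of random
variables and `Λ` the expectation, then `laplace Λ φ 1` is the moment generating function
of `φ`. -/
noncomputable def laplace (Λ : 𝔸 →L[ℂ] ℂ) (φ : ι → 𝔸) :
    𝔸 →ₗ[ℂ] analyticFunctions ℂ (ι → ℂ) where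
  toFun f := ⟨fun b => Λ (f * NormedSpace.exp (∑ i, b i • φ i)),
    Λ.contDiff.comp (contDiff_const.mul (contDiff_exp_sum_smul φ))⟩
  map_add' f g := Subtype.ext <| funext fun b => by simp [add_mul]
  map_smul' c f := Subtype.ext <| funext fun b => by simp

variable (Λ : 𝔸 →L[ℂ] ℂ) (φ : ι → 𝔸)

theorem laplace_apply (f : 𝔸) (b : ι → ℂ) :
    (laplace Λ φ f).1 b = Λ (f * NormedSpace.exp (∑ i, b i • φ i)) := rfl

theorem dirDeriv_laplace (v : ι → ℂ) (f : 𝔸) :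
    dirDeriv ℂ v (laplace Λ φ f) = laplace Λ φ ((∑ i, v i • φ i) * f) := by
  ext b
  have h := Λ.hasFDerivAt.comp_hasDerivAt 0
    ((hasDerivAt_exp_add_smul (∑ i, b i • φ i) (∑ i, v i • φ i)).const_mul f)
  have hline : HasLineDerivAt ℂ (laplace Λ φ f).1
      (Λ (f * (NormedSpace.exp (∑ i, b i • φ i) * ∑ i, v i • φ i))) b v := by
    refine h.congr_of_eventuallyEq (.of_forall fun ε => ?_)
    simp [laplace_apply, add_smul, Finset.sum_add_distrib, Finset.smul_sum, mul_smul]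
  rw [dirDeriv_apply, hline.lineDeriv, laplace_apply, mul_left_comm, mul_comm, mul_comm f]

theorem dirDeriv_single_laplace [DecidableEq ι] (i : ι) (f : 𝔸) :
    dirDeriv ℂ (Pi.single i 1) (laplace Λ φ f) = laplace Λ φ (φ i * f) := by
  simp [dirDeriv_laplace, Pi.single_apply]

end LaplaceTransform

section UnitarianTrick

theorem linearMap_eq_zero_of_forall_skewAdjoint {H V : Type*} [AddCommGroup H] [Module ℂ H]
    [StarAddMonoid H] [StarModule ℂ H] [AddCommGroup V] [Module ℂ V]
    (T : H →ₗ[ℂ] V) (hT : ∀ K ∈ skewAdjoint H, T K = 0) : T = 0 := by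
  have map_selfAdjoint (K : selfAdjoint H) : T K = 0 := by
    have h : Complex.I • T K = 0 := by
      rw [← map_smul]
      exact hT _ (IsSelfAdjoint.smul_mem_skewAdjoint Complex.conj_I K.2)
    exact (smul_eq_zero.1 h).resolve_left Complex.I_ne_zero
  ext X
  rw [← realPart_add_I_smul_imaginaryPart X, map_add, map_smul, map_selfAdjoint, map_selfAdjoint,
    smul_zero, add_zero, LinearMap.zero_apply]

variable {H 𝔅 : Type*} [NormedRing H] [NormedAlgebra ℂ H] [CompleteSpace H]
  [NormedRing 𝔅] [NormedAlgebra ℂ 𝔅]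

theorem exp_mem_unitary [StarRing H] [ContinuousStar H] {K : H} (hK : K ∈ skewAdjoint H) :
    NormedSpace.exp K ∈ unitary H := by
  let +nondep : NormedAlgebra ℚ H := .restrictScalars ℚ ℂ H
  exact NormedSpace.exp_mem_unitary_of_mem_skewAdjoint hK

theorem hasDerivAt_exp_smul_mul_mul_exp_smul_neg (P : H →A[ℂ] 𝔅) (K : H) (M : 𝔅) :
    HasDerivAt (fun ε : ℝ => P (NormedSpace.exp (ε • K)) * M * P (NormedSpace.exp (ε • -K)))
      (P K * M - M * P K) 0 := by
  have hasDerivAt_exp (X : H) : HasDerivAt (fun ε : ℝ => P (NormedSpace.exp (ε • X))) (P X) 0 := by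
    have h := hasDerivAt_exp_smul_const X (0 : ℝ)
    rw [zero_smul, NormedSpace.exp_zero, one_mul] at h
    exact (P.toContinuousLinearMap.restrictScalars ℝ).hasFDerivAt.comp_hasDerivAt 0 h
  refine (((hasDerivAt_exp K).mul_const M).mul (hasDerivAt_exp (-K))).congr_deriv ?_
  simp [sub_eq_add_neg]

theorem fderiv_commutator_eq_zero_of_forall_unitary [StarRing H] [StarModule ℂ H]
    [ContinuousStar H] {V : Type*} [NormedAddCommGroup V] [NormedSpace ℂ V]
    (P : H →A[ℂ] 𝔅) {M : 𝔅} {F : 𝔅 → V} (hF : DifferentiableAt ℂ F M)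
    (hinv : ∀ W ∈ unitary H, F (P W * M * P (star W)) = F M) (X : H) :
    fderiv ℂ F M (P X * M - M * P X) = 0 := by
  let T : H →ₗ[ℂ] V := (fderiv ℂ F M).toLinearMap ∘ₗ
    (LinearMap.mulRight ℂ M - LinearMap.mulLeft ℂ M) ∘ₗ P.toAlgHom.toLinearMap
  suffices hT : T = 0 from DFunLike.congr_fun hT X
  refine linearMap_eq_zero_of_forall_skewAdjoint T fun K hK => ?_
  have orbit_const (ε : ℝ) :
      F (P (NormedSpace.exp (ε • K)) * M * P (NormedSpace.exp (ε • -K))) = F M := by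
    have hεK : ε • K ∈ skewAdjoint H := skewAdjoint.smul_mem ε hK
    rw [← hinv _ (exp_mem_unitary hεK), NormedSpace.star_exp, skewAdjoint.mem_iff.1 hεK, smul_neg]
  have hF' : HasFDerivAt F (fderiv ℂ F M)
      (P (NormedSpace.exp ((0 : ℝ) • K)) * M * P (NormedSpace.exp ((0 : ℝ) • -K))) := by
    simpa using hF.hasFDerivAt
  have h := (hF'.restrictScalars ℝ).comp_hasDerivAt 0
    (hasDerivAt_exp_smul_mul_mul_exp_smul_neg P K M)
  exact h.unique ((hasDerivAt_const 0 (F M)).congr_of_eventuallyEq (.of_forall orbit_const))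

end UnitarianTrick

section TransvectionConj

variable {ι κ R : Type*} [Fintype ι] [DecidableEq ι] [Fintype κ] [DecidableEq κ] [CommRing R]

/-- The conjugate `T Y T⁻¹` of `Y` by the transvection `T = 1 + c E_{ij}`, where `i ≠ j`. -/
def transvectionConj (i j : ι) (c : R) (Y : Matrix ι ι R) : Matrix ι ι R :=
  transvection i j c * Y * transvection i j (-c)

theorem transvectionConj_zero (i j : ι) (Y : Matrix ι ι R) : transvectionConj i j 0 Y = Y := by
  simp [transvectionConj]

theorem transvectionConj_apply (i j : ι) (c : R) (Y : Matrix ι ι R) (k l : ι) :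
    transvectionConj i j c Y k l =
      Y k l + (if k = i then c * Y j l else 0) - (if l = j then c * Y k i else 0)
        - (if k = i ∧ l = j then c ^ 2 * Y j i else 0) := by
  unfold transvectionConj
  by_cases hk : k = i <;> by_cases hl : l = j <;> simp [hk, hl] <;> ring

theorem submatrix_transvectionConj {s : κ → ι} (hs : s.Injective) (i j : κ) (c : R)
    (Y : Matrix ι ι R) :
    (transvectionConj (s i) (s j) c Y).submatrix s s =
      transvectionConj i j c (Y.submatrix s s) := by
  ext k l
  simp only [submatrix_apply, transvectionConj_apply, hs.eq_iff]

theorem adjugate_transvection {i j : ι} (hij : i ≠ j) (c : R) :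
    (transvection i j c).adjugate = transvection i j (-c) := by
  calc (transvection i j c).adjugate
      = (transvection i j c).adjugate * (transvection i j c * transvection i j (-c)) := by
        rw [transvection_mul_transvection_same _ _ hij, add_neg_cancel, transvection_zero, mul_one]
    _ = transvection i j (-c) := by
        rw [← mul_assoc, adjugate_mul, det_transvection_of_ne _ _ hij, one_smul, one_mul]

theorem adjugate_transvectionConj {i j : ι} (hij : i ≠ j) (c : R) (Y : Matrix ι ι R) :
    (transvectionConj i j c Y).adjugate = transvectionConj i j c Y.adjugate := by
  rw [transvectionConj, adjugate_mul_distrib, adjugate_mul_distrib, adjugate_transvection hij,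
    adjugate_transvection hij, neg_neg, ← mul_assoc, transvectionConj]

theorem sum_smul_transvectionConj_diag {𝕜 : Type*} [CommRing 𝕜] [Algebra 𝕜 R] {i j : ι}
    (hij : i ≠ j) (b : ι → 𝕜) (c : R) (Y : Matrix ι ι R) :
    ∑ k, b k • transvectionConj i j c Y k k = ∑ k, b k • Y k k + c * (b i - b j) • Y j i := by
  have diag_entry (k : ι) : b k • transvectionConj i j c Y k k = b k • Y k k +
      ((if k = i then c * b i • Y j i else 0) - (if k = j then c * b j • Y j i else 0)) := by
    rw [transvectionConj_apply]
    by_cases hki : k = i <;> by_cases hkj : k = j <;> simp_all [smul_add, sub_eq_add_neg]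
  simp only [diag_entry, Finset.sum_add_distrib, Finset.sum_sub_distrib, Finset.sum_ite_eq',
    Finset.mem_univ, if_true, sub_smul, mul_sub]

end TransvectionConj

section UnitaryInvariance

theorem hasDerivAt_one_add_smul_mul_mul {𝕜 𝔅 : Type*} [NontriviallyNormedField 𝕜] [NormedRing 𝔅]
    [NormedAlgebra 𝕜 𝔅] (X M : 𝔅) :
    HasDerivAt (fun ε : 𝕜 => (1 + ε • X) * M * (1 + (-ε) • X)) (X * M - M * X) 0 := by
  have h₁ : HasDerivAt (fun ε : 𝕜 => 1 + ε • X) X 0 := by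
    simpa using ((hasDerivAt_id (0 : 𝕜)).smul_const X).const_add 1
  have h₂ : HasDerivAt (fun ε : 𝕜 => 1 + (-ε) • X) (-X) 0 := by
    simpa using ((hasDerivAt_id (0 : 𝕜)).neg.smul_const X).const_add 1
  refine ((h₁.mul_const M).mul h₂).congr_deriv ?_
  simp [sub_eq_add_neg]

variable {ι 𝔸 : Type*} [Fintype ι] [DecidableEq ι] [NormedCommRing 𝔸] [NormedAlgebra ℂ 𝔸]

/-- A matrix `M` with entries in an algebra `𝔸` of random variables with expectation `Λ` is
unitarily invariant in law: for every constant unitary matrix `W` some expectation-preserving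
endomorphism of `𝔸` maps the entries of `M` to those of `W M W*`. -/
def IsUnitarilyInvariant (Λ : 𝔸 →L[ℂ] ℂ) (M : Matrix ι ι 𝔸) : Prop :=
  ∀ W ∈ unitaryGroup ι ℂ, ∃ α : 𝔸 →A[ℂ] 𝔸, (∀ f, Λ (α f) = Λ f) ∧
    M.map α = W.map (algebraMap ℂ 𝔸) * M * Wᴴ.map (algebraMap ℂ 𝔸)

attribute [local instance] Matrix.linftyOpNormedRing Matrix.linftyOpNormedAlgebra

theorem IsUnitarilyInvariant.map_eq_zero_of_hasDerivAt {Λ : 𝔸 →L[ℂ] ℂ} {M : Matrix ι ι 𝔸}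
    (hM : IsUnitarilyInvariant Λ M) {g : Matrix ι ι 𝔸 → 𝔸} (hg : DifferentiableAt ℂ g M)
    (hnat : ∀ α : 𝔸 →A[ℂ] 𝔸, g (M.map α) = α (g M)) (i j : ι) {g' : 𝔸}
    (hg' : HasDerivAt (fun ε : ℂ => g (transvectionConj i j (algebraMap ℂ 𝔸 ε) M)) g' 0) :
    Λ g' = 0 := by
  let P : Matrix ι ι ℂ →A[ℂ] Matrix ι ι 𝔸 :=
    ⟨(Algebra.ofId ℂ 𝔸).mapMatrix,
      LinearMap.continuous_of_finiteDimensional (Algebra.ofId ℂ 𝔸).mapMatrix.toLinearMap⟩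
  have law_invariant (W) (hW : W ∈ unitary (Matrix ι ι ℂ)) :
      Λ (g (P W * M * P (star W))) = Λ (g M) := by
    obtain ⟨α, hα, hMα⟩ := hM W hW
    rw [← hα (g M), ← hnat, hMα]
    rfl
  have transvection_eq (ε : ℂ) :
      transvection i j (algebraMap ℂ 𝔸 ε) = 1 + ε • P (single i j 1) := by
    change _ = 1 + ε • (single i j 1).map (algebraMap ℂ 𝔸)
    rw [map_single, map_one, smul_single, ← Algebra.algebraMap_eq_smul_one, transvection]
  simp only [transvectionConj, ← map_neg, transvection_eq] at hg'
  have hgM : HasFDerivAt g (fderiv ℂ g M) ((1 + (0 : ℂ) • P (single i j 1)) * M *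
      (1 + (-(0 : ℂ)) • P (single i j 1))) := by
    simpa using hg.hasFDerivAt
  have hgc := hgM.comp_hasDerivAt 0 (hasDerivAt_one_add_smul_mul_mul (P (single i j 1)) M)
  have hΛg : fderiv ℂ (fun Y => Λ (g Y)) M = Λ.comp (fderiv ℂ g M) :=
    (Λ.hasFDerivAt.comp M hg.hasFDerivAt).fderiv
  have : @ContinuousStar (Matrix ι ι ℂ) PseudoMetricSpace.toUniformSpace.toTopologicalSpace _ :=
    ⟨continuous_id.matrix_conjTranspose⟩
  have key := fderiv_commutator_eq_zero_of_forall_unitary P (Λ.differentiableAt.comp M hg)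
    law_invariant (single i j 1)
  rw [hg'.unique hgc]
  exact (DFunLike.congr_fun hΛg _).symm.trans key

end UnitaryInvariance

section LoopEquation

theorem differentiable_det {𝕜 E 𝔸 κ : Type*} [NontriviallyNormedField 𝕜] [NormedAddCommGroup E]
    [NormedSpace 𝕜 E] [NormedCommRing 𝔸] [NormedAlgebra 𝕜 𝔸] [Fintype κ] [DecidableEq κ]
    {f : E → Matrix κ κ 𝔸} (hf : ∀ i j, Differentiable 𝕜 fun x => f x i j) :
    Differentiable 𝕜 fun x => (f x).det := by
  simp only [det_apply]
  fun_prop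

theorem differentiable_adjugate_apply {𝕜 E 𝔸 κ : Type*} [NontriviallyNormedField 𝕜]
    [NormedAddCommGroup E] [NormedSpace 𝕜 E] [NormedCommRing 𝔸] [NormedAlgebra 𝕜 𝔸] [Fintype κ]
    [DecidableEq κ] {f : E → Matrix κ κ 𝔸} (hf : ∀ i j, Differentiable 𝕜 fun x => f x i j)
    (i j : κ) : Differentiable 𝕜 fun x => (f x).adjugate i j := by
  simp only [adjugate_apply]
  refine differentiable_det fun k l => ?_
  by_cases hk : k = j
  · simp [hk]
  · simpa [hk] using hf k l

variable {ι κ 𝔸 : Type*} [Fintype ι] [Fintype κ] [DecidableEq κ] [NormedCommRing 𝔸]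
  [NormedAlgebra ℂ 𝔸]

theorem hasDerivAt_adjugate_submatrix_transvectionConj [DecidableEq ι] {s : κ → ι}
    (hs : s.Injective) {j m : κ} (hjm : j ≠ m) (M : Matrix ι ι 𝔸) :
    HasDerivAt (fun ε : ℂ => ((transvectionConj (s j) (s m) (algebraMap ℂ 𝔸 ε) M).submatrix
        s s).adjugate j m)
      ((M.submatrix s s).adjugate m m - (M.submatrix s s).adjugate j j) 0 := by
  set N := (M.submatrix s s).adjugate
  have adjugate_curve (ε : ℂ) :
      ((transvectionConj (s j) (s m) (algebraMap ℂ 𝔸 ε) M).submatrix s s).adjugate j m =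
        N j m + ε • (N m m - N j j) - ε ^ 2 • N m j := by
    rw [submatrix_transvectionConj hs, adjugate_transvectionConj hjm, transvectionConj_apply]
    simp [Algebra.smul_def, N]
    ring
  simp only [adjugate_curve]
  refine ((((hasDerivAt_id (0 : ℂ)).smul_const (N m m - N j j)).const_add (N j m)).sub
    (((hasDerivAt_id (0 : ℂ)).pow 2).smul_const (N m j))).congr_deriv ?_
  simp

variable [CompleteSpace 𝔸]

theorem hasDerivAt_exp_sum_smul_transvectionConj [DecidableEq ι] {i j : ι} (hij : i ≠ j)
    (b : ι → ℂ) (M : Matrix ι ι 𝔸) :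
    HasDerivAt (fun ε : ℂ =>
        NormedSpace.exp (∑ k, b k • transvectionConj i j (algebraMap ℂ 𝔸 ε) M k k))
      (NormedSpace.exp (∑ k, b k • M k k) * ((b i - b j) • M j i)) 0 := by
  simp only [sum_smul_transvectionConj_diag hij, ← Algebra.smul_def]
  exact hasDerivAt_exp_add_smul _ _

theorem map_adjugate_submatrix_mul_exp (α : 𝔸 →A[ℂ] 𝔸) (s : κ → ι) (j m : κ) (b : ι → ℂ)
    (M : Matrix ι ι 𝔸) :
    ((M.map α).submatrix s s).adjugate j m * NormedSpace.exp (∑ i, b i • M.map α i i) =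
      α ((M.submatrix s s).adjugate j m * NormedSpace.exp (∑ i, b i • M i i)) := by
  let +nondep : NormedAlgebra ℚ 𝔸 := .restrictScalars ℚ ℂ 𝔸
  have map_adjugate : (M.submatrix s s).adjugate.map α = ((M.map α).submatrix s s).adjugate :=
    AlgHom.map_adjugate α.toAlgHom _
  rw [map_mul, NormedSpace.map_exp α α.cont, ← map_adjugate]
  simp

variable [DecidableEq ι]

attribute [local instance] Matrix.linftyOpNormedRing Matrix.linftyOpNormedAlgebra

theorem IsUnitarilyInvariant.loop_equation {Λ : 𝔸 →L[ℂ] ℂ} {M : Matrix ι ι 𝔸}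
    (hM : IsUnitarilyInvariant Λ M) {s : κ → ι} (hs : s.Injective) {j m : κ} (hjm : j ≠ m)
    (b : ι → ℂ) :
    (b (s m) - b (s j)) *
        (laplace Λ M.diag (M (s m) (s j) * (M.submatrix s s).adjugate j m)).1 b =
      (laplace Λ M.diag ((M.submatrix s s).adjugate m m)).1 b -
        (laplace Λ M.diag ((M.submatrix s s).adjugate j j)).1 b := by
  have entry_diff (k l : ι) : Differentiable ℂ fun Y : Matrix ι ι 𝔸 => Y k l :=
    (⟨entryLinearMap ℂ 𝔸 k l, continuous_id.matrix_elem k l⟩ :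
      Matrix ι ι 𝔸 →L[ℂ] 𝔸).differentiable
  have exp_diff : Differentiable ℂ (NormedSpace.exp : 𝔸 → 𝔸) := fun x =>
    (hasFDerivAt_exp (𝕂 := ℂ)).differentiableAt
  have g_diff : Differentiable ℂ fun Y : Matrix ι ι 𝔸 =>
      (Y.submatrix s s).adjugate j m * NormedSpace.exp (∑ i, b i • Y i i) :=
    (differentiable_adjugate_apply (fun k l => entry_diff (s k) (s l)) j m).mul <|
      exp_diff.comp <| .fun_sum fun i _ => (entry_diff i i).const_smul (b i)
  have h := hM.map_eq_zero_of_hasDerivAt (g_diff M)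
    (fun α => map_adjugate_submatrix_mul_exp α s j m b M) (s j) (s m)
    ((hasDerivAt_adjugate_submatrix_transvectionConj hs hjm M).mul
      (hasDerivAt_exp_sum_smul_transvectionConj (hs.ne hjm) b M))
  simp only [map_zero, transvectionConj_zero] at h
  simp only [laplace_apply, diag_apply]
  rw [← smul_eq_mul, ← map_smul, ← map_sub, ← sub_eq_zero, ← map_sub, ← neg_eq_zero, ← map_neg, ← h]
  congr 1
  simp only [Algebra.smul_def, map_sub]
  ring

end LoopEquation

section MinorRecursion

theorem adjugate_submatrix_diag {ι R : Type*} [CommRing R] {n : ℕ} (M : Matrix ι ι R)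
    (s : Fin (n + 1) → ι) (m : Fin (n + 1)) :
    (M.submatrix s s).adjugate m m =
      (M.submatrix (s ∘ m.succAbove) (s ∘ m.succAbove)).det := by
  rw [adjugate_fin_succ_eq_det_submatrix, Even.neg_one_pow ⟨_, rfl⟩, one_mul, submatrix_submatrix]

variable {ι 𝔸 : Type*} [Fintype ι] [DecidableEq ι] [NormedCommRing 𝔸] [NormedAlgebra ℂ 𝔸]
  [CompleteSpace 𝔸]

/-- The Laplace transform of the principal minor of `M` on the rows and columns `s`, with respect
to the diagonal of `M`. -/
noncomputable def laplaceMinor (Λ : 𝔸 →L[ℂ] ℂ) (M : Matrix ι ι 𝔸) {n : ℕ} (s : Fin n → ι) :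
    analyticFunctions ℂ (ι → ℂ) :=
  laplace Λ M.diag (M.submatrix s s).det

theorem IsUnitarilyInvariant.laplaceMinor_succ_apply {Λ : 𝔸 →L[ℂ] ℂ} {M : Matrix ι ι 𝔸}
    (hM : IsUnitarilyInvariant Λ M) {n : ℕ} {s : Fin (n + 1) → ι} (hs : s.Injective)
    (m : Fin (n + 1)) {b : ι → ℂ} (hb : b.Injective) :
    (laplaceMinor Λ M s).1 b =
      (dirDeriv ℂ (Pi.single (s m) 1) (laplaceMinor Λ M (s ∘ m.succAbove))).1 b +
        ∑ j ∈ Finset.univ.erase m,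
          ((laplaceMinor Λ M (s ∘ m.succAbove)).1 b - (laplaceMinor Λ M (s ∘ j.succAbove)).1 b) /
            (b (s m) - b (s j)) := by
  have expand : laplaceMinor Λ M s =
      ∑ j, laplace Λ M.diag (M (s m) (s j) * (M.submatrix s s).adjugate j m) := by
    rw [laplaceMinor, det_eq_sum_mul_adjugate_row _ m, map_sum]
    rfl
  rw [expand, ← Finset.add_sum_erase _ _ (Finset.mem_univ m), laplaceMinor,
    dirDeriv_single_laplace, ← adjugate_submatrix_diag]
  simp only [AddMemClass.coe_add, AddSubmonoidClass.coe_finsetSum, Pi.add_apply, Finset.sum_apply]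
  congr 1
  refine Finset.sum_congr rfl fun j hj => ?_
  have hjm : j ≠ m := Finset.ne_of_mem_erase hj
  rw [eq_div_iff (sub_ne_zero.2 (hb.ne (hs.ne hjm.symm))), mul_comm, hM.loop_equation hs hjm,
    adjugate_submatrix_diag, adjugate_submatrix_diag]
  rfl

end MinorRecursion

section Vandermonde

open Polynomial

theorem sum_eval_mul_det_vandermonde_succAbove {R : Type*} [CommRing R] {n : ℕ}
    (x : Fin (n + 1) → R) {q : R[X]} (hq : q.Monic) (hdeg : q.natDegree = n) :
    ∑ m : Fin (n + 1), (-1) ^ (m + n : ℕ) * q.eval (x m) * (vandermonde (x ∘ m.succAbove)).det =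
      (vandermonde x).det := by
  have hcol := det_updateCol_sum (vandermonde x) (Fin.last n) fun k => q.coeff k
  have hlead : q.coeff (Fin.last n) = 1 := by
    rw [Fin.val_last, ← hdeg, hq.coeff_natDegree]
  rw [hlead, one_smul, det_succ_column _ (Fin.last n), Fin.val_last] at hcol
  rw [← hcol]
  refine Finset.sum_congr rfl fun m _ => ?_
  congr 2
  · simp only [updateCol_self, vandermonde_apply, smul_eq_mul]
    rw [eval_eq_sum_range, hdeg, ← Fin.sum_univ_eq_sum_range fun i => q.coeff i * x m ^ i]
  · ext i j
    simp [vandermonde_apply, Fin.castSucc_ne_last]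

variable {K : Type*} [Field K] {n : ℕ}

theorem natDegree_nodal_univ_erase (v : Fin (n + 1) → K) (m : Fin (n + 1)) :
    (Lagrange.nodal (Finset.univ.erase m) v).natDegree = n := by
  simp [Lagrange.natDegree_nodal]

theorem det_vandermonde_succAbove_mul_prod_erase (v : Fin (n + 1) → K) (m : Fin (n + 1)) :
    (-1) ^ (m + n : ℕ) * (vandermonde (v ∘ m.succAbove)).det *
      ∏ j ∈ Finset.univ.erase m, (v m - v j) = (vandermonde v).det := by
  rw [← sum_eval_mul_det_vandermonde_succAbove v Lagrange.nodal_monic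
    (natDegree_nodal_univ_erase v m), Finset.sum_eq_single_of_mem m (Finset.mem_univ m),
    Lagrange.eval_nodal, mul_right_comm]
  intro l _ hl
  rw [Lagrange.eval_nodal_at_node (Finset.mem_erase.2 ⟨hl, Finset.mem_univ l⟩), mul_zero, zero_mul]

theorem sum_det_vandermonde_mul_nodal_derivative {v : Fin (n + 1) → K} (hv : v.Injective)
    (G H : Fin (n + 1) → K) :
    ∑ m : Fin (n + 1), (-1) ^ (m + n : ℕ) * (vandermonde (v ∘ m.succAbove)).det *
        ((Lagrange.nodal (Finset.univ.erase 0) v).derivative.eval (v m) * G m +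
          (Lagrange.nodal (Finset.univ.erase 0) v).eval (v m) * H m) =
      (vandermonde v).det * (H 0 + ∑ j ∈ Finset.univ.erase 0, (G 0 - G j) / (v 0 - v j)) := by
  have hne {i j : Fin (n + 1)} (h : i ≠ j) : v i - v j ≠ 0 := sub_ne_zero.2 (hv.ne h)
  have derivative_zero : (Lagrange.nodal (Finset.univ.erase 0) v).derivative.eval (v 0) =
      ∑ j ∈ Finset.univ.erase 0, (∏ k ∈ Finset.univ.erase 0, (v 0 - v k)) / (v 0 - v j) := by
    rw [Lagrange.derivative_nodal, eval_finsetSum]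
    refine Finset.sum_congr rfl fun j hj => ?_
    rw [Lagrange.eval_nodal, ← Finset.mul_prod_erase _ _ hj,
      mul_div_cancel_left₀ _ (hne (Finset.ne_of_mem_erase hj).symm)]
  have term_succ (m : Fin (n + 1)) (hm : m ∈ Finset.univ.erase 0) :
      (-1) ^ (m + n : ℕ) * (vandermonde (v ∘ m.succAbove)).det *
        ((Lagrange.nodal (Finset.univ.erase 0) v).derivative.eval (v m) * G m +
          (Lagrange.nodal (Finset.univ.erase 0) v).eval (v m) * H m) =
      (vandermonde v).det * (-G m / (v 0 - v m)) := by
    have hm0 := Finset.ne_of_mem_erase hm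
    rw [Lagrange.eval_nodal_derivative_eval_node_eq hm, Lagrange.eval_nodal_at_node hm,
      Lagrange.eval_nodal, Finset.erase_right_comm,
      ← det_vandermonde_succAbove_mul_prod_erase v m,
      ← Finset.mul_prod_erase _ _ (Finset.mem_erase.2 ⟨hm0.symm, Finset.mem_univ 0⟩),
      ← neg_sub (v m) (v 0), neg_div_neg_eq]
    field_simp [hne hm0]
    ring
  rw [← Finset.add_sum_erase _ _ (Finset.mem_univ 0), Finset.sum_congr rfl term_succ,
    ← Finset.mul_sum, derivative_zero, Lagrange.eval_nodal,
    ← det_vandermonde_succAbove_mul_prod_erase v 0]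
  simp only [div_eq_mul_inv, sub_mul, neg_mul, Finset.sum_sub_distrib, Finset.sum_neg_distrib,
    ← Finset.mul_sum]
  ring

end Vandermonde

section AlternatingFactor

variable {ι : Type*} [Fintype ι]

theorem dense_setOf_injective (ι 𝕜 : Type*) [Finite ι] [NontriviallyNormedField 𝕜]
    [CompleteSpace 𝕜] : Dense {b : ι → 𝕜 | b.Injective} := by
  have eq_iInter : {b : ι → 𝕜 | b.Injective} =
      ⋂ p : {p : ι × ι // p.1 ≠ p.2}, {b | b p.1.1 - b p.1.2 ≠ 0} := by
    ext b
    simp only [Set.mem_iInter, Set.mem_ofPred_eq, sub_ne_zero, Subtype.forall, Prod.forall]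
    exact ⟨fun hb i j hij => hb.ne hij, fun h i j => not_imp_not.1 (h i j)⟩
  rw [eq_iInter]
  refine dense_iInter_of_isOpen (fun p => ?_) fun ⟨⟨i, j⟩, hij⟩ => ?_
  · exact isOpen_ne_fun (by fun_prop) continuous_const
  · let ℓ : (ι → 𝕜) →ₗ[𝕜] 𝕜 := .proj i - .proj j
    have surjective : Function.Surjective ℓ := fun c => by
      classical exact ⟨Pi.single i c, by simp [ℓ, Pi.single_eq_of_ne hij.symm]⟩
    exact (dense_compl_singleton (0 : 𝕜)).preimage (ℓ.isOpenMap_of_finiteDimensional surjective)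

theorem analyticFunctions_ext_of_injective {F G : analyticFunctions ℂ (ι → ℂ)}
    (h : ∀ b : ι → ℂ, b.Injective → F.1 b = G.1 b) : F = G :=
  Subtype.ext <| Continuous.ext_on (dense_setOf_injective ι ℂ)
    (contDiff_analyticFunctions F).continuous (contDiff_analyticFunctions G).continuous h

/-- The polynomial `q` in the `i`-th coordinate, as an analytic function. -/
noncomputable def polynomialCoord (q : Polynomial ℂ) (i : ι) : analyticFunctions ℂ (ι → ℂ) :=
  ⟨fun b => q.eval (b i), by
    have hq : ContDiff ℂ ω fun x : ℂ => q.eval x := by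
      simpa using q.contDiff_aeval (𝕜 := ℂ) ω
    exact hq.comp (contDiff_apply ℂ ℂ i)⟩

/-- The Vandermonde determinant in the coordinates `s 0, s 1, …`, as an analytic function. -/
noncomputable def vandermondeFun {n : ℕ} (s : Fin n → ι) : analyticFunctions ℂ (ι → ℂ) :=
  ⟨fun b => (vandermonde (b ∘ s)).det, by
    change ContDiff ℂ ω fun b : ι → ℂ => (vandermonde (b ∘ s)).det
    simp only [det_apply, vandermonde_apply]
    exact ContDiff.sum fun σ _ => .const_smul _ <| contDiff_prod fun i _ =>
      (contDiff_apply ℂ ℂ (s (σ i))).pow _⟩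

theorem vandermondeFun_eq_sum {n : ℕ} (s : Fin (n + 1) → ι) {q : Polynomial ℂ} (hq : q.Monic)
    (hdeg : q.natDegree = n) :
    vandermondeFun s = ∑ m : Fin (n + 1), (-1 : ℂ) ^ (m + n : ℕ) •
      (polynomialCoord q (s m) * vandermondeFun (s ∘ m.succAbove)) := by
  ext b
  change (vandermonde (b ∘ s)).det = _
  rw [← sum_eval_mul_det_vandermonde_succAbove (b ∘ s) hq hdeg, AddSubmonoidClass.coe_finsetSum,
    Finset.sum_apply]
  exact Finset.sum_congr rfl fun m _ => mul_assoc _ _ _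

variable [DecidableEq ι]

theorem dirDeriv_polynomialCoord_of_ne (q : Polynomial ℂ) {i j : ι} (h : i ≠ j) :
    dirDeriv ℂ (Pi.single j 1) (polynomialCoord q i) = 0 :=
  dirDeriv_eq_zero_of_forall_add_smul_eq fun b ε => by simp [polynomialCoord, h]

theorem dirDeriv_polynomialCoord_self (q : Polynomial ℂ) (i : ι) :
    dirDeriv ℂ (Pi.single i 1) (polynomialCoord q i) = polynomialCoord q.derivative i := by
  ext b
  have h : HasFDerivAt (polynomialCoord q i).1
      (q.derivative.eval (b i) • (.proj i : (ι → ℂ) →L[ℂ] ℂ)) b :=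
    HasDerivAt.comp_hasFDerivAt (f := fun b : ι → ℂ => b i) b (q.hasDerivAt (b i))
      (hasFDerivAt_apply i b)
  change fderiv ℂ (polynomialCoord q i).1 b (Pi.single i 1) = q.derivative.eval (b i)
  simp [h.fderiv]

theorem dirDeriv_vandermondeFun_of_forall_ne {n : ℕ} {s : Fin n → ι} {i : ι} (h : ∀ k, s k ≠ i) :
    dirDeriv ℂ (Pi.single i 1) (vandermondeFun s) = 0 :=
  dirDeriv_eq_zero_of_forall_add_smul_eq fun b ε => congrArg (fun v => (vandermonde v).det) <|
    funext fun k => by simp [h k]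

end AlternatingFactor

section VandermondeIntertwining

variable {ι 𝔸 : Type*} [Fintype ι] [DecidableEq ι] [NormedCommRing 𝔸] [NormedAlgebra ℂ 𝔸]
  [CompleteSpace 𝔸]

/-- The partial derivative with respect to the `i`-th coordinate, as a constant-coefficient
operator. -/
noncomputable def coordDerivOp (i : ι) : constCoeffOps ℂ (ι → ℂ) :=
  dirDerivOp ℂ (Pi.single i 1)

theorem coordDerivOp_smul (i : ι) (F : analyticFunctions ℂ (ι → ℂ)) :
    coordDerivOp i • F = dirDeriv ℂ (Pi.single i 1) F := rfl

theorem prod_coordDerivOp_smul_polynomialCoord_mul {n : ℕ} {s : Fin (n + 1) → ι}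
    (hs : s.Injective) (q : Polynomial ℂ) (m : Fin (n + 1)) (F : analyticFunctions ℂ (ι → ℂ)) :
    (∏ k, coordDerivOp (s k)) • (polynomialCoord q (s m) * F) =
      dirDeriv ℂ (Pi.single (s m) 1) (polynomialCoord q (s m) *
        (∏ k, coordDerivOp ((s ∘ m.succAbove) k)) • F) := by
  have hconst (k : Fin n) (_ : k ∈ Finset.univ) :
      dirDeriv ℂ (Pi.single ((s ∘ m.succAbove) k) 1) (polynomialCoord q (s m)) =
        (0 : ℂ) • polynomialCoord q (s m) :=
    (dirDeriv_polynomialCoord_of_ne q (hs.ne (m.succAbove_ne k).symm)).trans (zero_smul ℂ _).symm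
  rw [Fin.prod_univ_succAbove _ m, mul_smul, coordDerivOp_smul]
  have pull_out := prod_dirDerivOp_smul_mul Finset.univ hconst F
  simp only [map_zero, add_zero] at pull_out
  exact congrArg _ pull_out

theorem dirDeriv_polynomialCoord_mul_vandermondeFun_mul {n : ℕ} {s : Fin (n + 1) → ι}
    (hs : s.Injective) (q : Polynomial ℂ) (m : Fin (n + 1)) (F : analyticFunctions ℂ (ι → ℂ)) :
    dirDeriv ℂ (Pi.single (s m) 1)
        (polynomialCoord q (s m) * (vandermondeFun (s ∘ m.succAbove) * F)) =
      vandermondeFun (s ∘ m.succAbove) * (polynomialCoord q.derivative (s m) * F +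
        polynomialCoord q (s m) * dirDeriv ℂ (Pi.single (s m) 1) F) := by
  rw [Derivation.leibniz, Derivation.leibniz, dirDeriv_polynomialCoord_self,
    dirDeriv_vandermondeFun_of_forall_ne (s := s ∘ m.succAbove) fun k => hs.ne (m.succAbove_ne k)]
  simp only [smul_eq_mul, mul_zero, add_zero]
  ring

variable {Λ : 𝔸 →L[ℂ] ℂ} {M : Matrix ι ι 𝔸}

theorem IsUnitarilyInvariant.prod_coordDerivOp_smul_vandermondeFun_mul_laplace_one
    (hM : IsUnitarilyInvariant Λ M) {n : ℕ} {s : Fin n → ι} (hs : s.Injective) :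
    (∏ k, coordDerivOp (s k)) • (vandermondeFun s * laplace Λ M.diag 1) =
      vandermondeFun s * laplaceMinor Λ M s := by
  induction n with
  | zero => simp [laplaceMinor]
  | succ n ih =>
    refine analyticFunctions_ext_of_injective fun b hb => ?_
    set q := Lagrange.nodal (Finset.univ.erase 0) (b ∘ s)
    have expand : (∏ k, coordDerivOp (s k)) •
          (vandermondeFun s * laplace Λ M.diag 1) =
        ∑ m : Fin (n + 1), (-1 : ℂ) ^ (m + n : ℕ) • (vandermondeFun (s ∘ m.succAbove) *
          (polynomialCoord q.derivative (s m) * laplaceMinor Λ M (s ∘ m.succAbove) +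
            polynomialCoord q (s m) *
              dirDeriv ℂ (Pi.single (s m) 1) (laplaceMinor Λ M (s ∘ m.succAbove)))) := by
      rw [vandermondeFun_eq_sum s Lagrange.nodal_monic (natDegree_nodal_univ_erase (b ∘ s) 0),
        Finset.sum_mul, Finset.smul_sum]
      refine Finset.sum_congr rfl fun m _ => ?_
      rw [smul_mul_assoc, smul_comm, mul_assoc, prod_coordDerivOp_smul_polynomialCoord_mul hs,
        ih (hs.comp Fin.succAbove_right_injective),
        dirDeriv_polynomialCoord_mul_vandermondeFun_mul hs]
    have collect := sum_det_vandermonde_mul_nodal_derivative (hb.comp hs)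
      (fun m => (laplaceMinor Λ M (s ∘ m.succAbove)).1 b)
      (fun m => (dirDeriv ℂ (Pi.single (s m) 1) (laplaceMinor Λ M (s ∘ m.succAbove))).1 b)
    rw [expand, AddSubmonoidClass.coe_finsetSum, Finset.sum_apply]
    change _ = (vandermonde (b ∘ s)).det * (laplaceMinor Λ M s).1 b
    rw [hM.laplaceMinor_succ_apply hs 0 hb]
    refine Eq.trans (Finset.sum_congr rfl fun m _ => ?_) collect
    exact (mul_assoc _ _ _).symm

end VandermondeIntertwining

section ScalarShift

theorem IsUnitarilyInvariant.add_scalar {ι 𝔸 : Type*} [Fintype ι] [DecidableEq ι]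
    [NormedCommRing 𝔸] [NormedAlgebra ℂ 𝔸] {Λ : 𝔸 →L[ℂ] ℂ} {M : Matrix ι ι 𝔸}
    (hM : IsUnitarilyInvariant Λ M) (c : ℂ) :
    IsUnitarilyInvariant Λ (M + scalar ι (algebraMap ℂ 𝔸 c)) := by
  intro W hW
  obtain ⟨α, hα, hαM⟩ := hM W hW
  have hWW : W.map (algebraMap ℂ 𝔸) * Wᴴ.map (algebraMap ℂ 𝔸) = 1 := by
    rw [← Matrix.map_mul, ← star_eq_conjTranspose, mem_unitaryGroup_iff.1 hW,
      Matrix.map_one _ (map_zero _) (map_one _)]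
  refine ⟨α, hα, ?_⟩
  have map_scalar : (scalar ι (algebraMap ℂ 𝔸 c)).map α = scalar ι (algebraMap ℂ 𝔸 c) := by
    simp [scalar_apply, diagonal_map, AlgHomClass.commutes]
  rw [Matrix.map_add _ (map_add α), map_scalar, hαM, mul_add, add_mul,
    ← (scalar_commute _ (Commute.all _) _).eq, mul_assoc, mul_assoc, hWW, mul_one]

variable {ι 𝔸 : Type*} [Fintype ι] [NormedCommRing 𝔸] [NormedAlgebra ℂ 𝔸] [CompleteSpace 𝔸]

/-- The exponential function `b ↦ exp (∑ i, b i * c i)`. -/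
noncomputable def expFun (c : ι → ℂ) : analyticFunctions ℂ (ι → ℂ) :=
  laplace (.id ℂ ℂ) c 1

theorem expFun_apply (c b : ι → ℂ) : (expFun c).1 b = Complex.exp (∑ i, b i * c i) := by
  simp [expFun, laplace_apply, Complex.exp_eq_exp_ℂ]

theorem dirDeriv_expFun [DecidableEq ι] (c : ι → ℂ) (i : ι) :
    dirDeriv ℂ (Pi.single i 1) (expFun c) = c i • expFun c := by
  rw [expFun, dirDeriv_single_laplace, ← smul_eq_mul, map_smul]

theorem expFun_mul_left_cancel {c : ι → ℂ} {F G : analyticFunctions ℂ (ι → ℂ)}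
    (h : expFun c * F = expFun c * G) : F = G :=
  Subtype.ext <| funext fun b =>
    mul_left_cancel₀ (by rw [expFun_apply]; exact Complex.exp_ne_zero _)
      (congrFun (congrArg Subtype.val h) b)

theorem laplace_add_algebraMap (Λ : 𝔸 →L[ℂ] ℂ) (φ : ι → 𝔸) (c : ι → ℂ) (f : 𝔸) :
    laplace Λ (fun i => φ i + algebraMap ℂ 𝔸 (c i)) f = expFun c * laplace Λ φ f := by
  let +nondep : NormedAlgebra ℚ 𝔸 := .restrictScalars ℚ ℂ 𝔸
  ext b
  have split : ∑ i, b i • (φ i + algebraMap ℂ 𝔸 (c i)) =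
      algebraMap ℂ 𝔸 (∑ i, b i * c i) + ∑ i, b i • φ i := by
    simp [Algebra.smul_def, mul_add, Finset.sum_add_distrib, add_comm]
  change Λ (f * NormedSpace.exp _) = (expFun c).1 b * Λ (f * NormedSpace.exp _)
  rw [split, NormedSpace.exp_add, ← NormedSpace.algebraMap_exp_comm, mul_left_comm,
    ← Algebra.smul_def, map_smul, smul_eq_mul, expFun_apply, Complex.exp_eq_exp_ℂ]

variable [DecidableEq ι] {Λ : 𝔸 →L[ℂ] ℂ} {M : Matrix ι ι 𝔸}

theorem IsUnitarilyInvariant.prod_coordDerivOp_add_smul_vandermondeFun_mul_laplace_one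
    (hM : IsUnitarilyInvariant Λ M) (c : ℂ) {n : ℕ} {s : Fin n → ι} (hs : s.Injective) :
    (∏ k, (coordDerivOp (s k) + algebraMap ℂ _ c)) • (vandermondeFun s * laplace Λ M.diag 1) =
      vandermondeFun s *
        laplace Λ M.diag ((M + scalar ι (algebraMap ℂ 𝔸 c)).submatrix s s).det := by
  have shift (f : 𝔸) : laplace Λ (M + scalar ι (algebraMap ℂ 𝔸 c)).diag f =
      expFun (fun _ => c) * laplace Λ M.diag f := by
    rw [← laplace_add_algebraMap]
    congr
    ext i
    simp
  have key := (hM.add_scalar c).prod_coordDerivOp_smul_vandermondeFun_mul_laplace_one hs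
  rw [laplaceMinor, shift, shift, mul_left_comm, mul_left_comm (vandermondeFun s)] at key
  have conj := prod_dirDerivOp_smul_mul (v := fun k => Pi.single (s k) (1 : ℂ)) Finset.univ
    (fun k _ => dirDeriv_expFun (fun _ => c) (s k)) (vandermondeFun s * laplace Λ M.diag 1)
  exact expFun_mul_left_cancel (conj.symm.trans key)

end ScalarShift

section JointEigenvectors

open Polynomial

theorem prod_X_sub_C_eq_of_forall_prod_sub_eq_zero {ι R : Type*} [Fintype ι] [CommRing R]
    {x c : ι → R} (hc : Pairwise fun i j => IsUnit (c i - c j))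
    (h : ∀ j, ∏ i, (x i - c j) = 0) : ∏ i, (X - C (x i)) = ∏ j, (X - C (c j)) := by
  nontriviality R
  have hcoprime : Pairwise (Function.onFun IsCoprime fun j => X - C (c j)) :=
    fun i j hij => isCoprime_X_sub_C_of_isUnit_sub (hc hij)
  have hdvd : ∏ j, (X - C (c j)) ∣ ∏ i, (X - C (x i)) :=
    Finset.prod_dvd_of_coprime (hcoprime.set_pairwise _) fun j _ =>
      dvd_iff_isRoot.2 <| by
        simp_rw [IsRoot, eval_prod, eval_sub, eval_X, eval_C, ← neg_sub (x _), Finset.prod_neg]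
        rw [h j, mul_zero]
  have hmonic (y : ι → R) : (∏ i, (X - C (y i))).Monic := monic_prod_X_sub_C y Finset.univ
  exact eq_of_monic_of_dvd_of_natDegree_le (hmonic c) (hmonic x) hdvd (by simp)

variable {ι K R N : Type*} [Fintype ι] [Field K] [CommRing R] [Algebra K R] [AddCommGroup N]
  [Module R N] {a : ι → K} {x : ι → R} {F : N}

theorem prod_sub_algebraMap_smul_eq_zero (ha : a.Injective)
    (h : ∀ j, (∏ i, (x i - algebraMap K R (a j))) • F = 0) (i : ι) :
    (∏ j, (x i - algebraMap K R (a j))) • F = 0 := by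
  let π : R →+* R ⧸ Ideal.torsionOf R N F := Ideal.Quotient.mk _
  have smul_eq_zero_iff (r : R) : r • F = 0 ↔ π r = 0 := by
    rw [Ideal.Quotient.eq_zero_iff_mem, Ideal.mem_torsionOf_iff]
  have hunit : Pairwise fun j k =>
      IsUnit (π (algebraMap K R (a j)) - π (algebraMap K R (a k))) := by
    intro j k hjk
    rw [← map_sub, ← map_sub]
    exact ((sub_ne_zero.2 (ha.ne hjk)).isUnit.map (algebraMap K R)).map π
  simp only [smul_eq_zero_iff, map_prod, map_sub] at h ⊢
  have heval := congrArg (eval (π (x i))) (prod_X_sub_C_eq_of_forall_prod_sub_eq_zero hunit h)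
  simp only [eval_prod, eval_sub, eval_X, eval_C] at heval
  rw [← heval, Finset.prod_eq_zero (Finset.mem_univ i) (sub_self _)]

theorem exists_sum_joint_eigenvectors [Module K N] [IsScalarTower K R N] [DecidableEq ι]
    (ha : a.Injective) (h : ∀ i, (∏ j, (x i - algebraMap K R (a j))) • F = 0) :
    ∃ G : (ι → ι) → N, F = ∑ σ, G σ ∧ ∀ σ i, x i • G σ = a (σ i) • G σ := by
  let ℓ (i j : ι) : R := aeval (x i) (Lagrange.basis Finset.univ a j)
  have sum_basis (i : ι) : ∑ j, ℓ i j = 1 := by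
    rw [← map_sum, Lagrange.sum_basis ha.injOn ⟨i, Finset.mem_univ i⟩, map_one]
  have sub_mul_basis (i j : ι) : (x i - algebraMap K R (a j)) * ℓ i j =
      algebraMap K R (Lagrange.nodalWeight Finset.univ a j) *
        ∏ k, (x i - algebraMap K R (a k)) := by
    have hbasis : (X - C (a j)) * Lagrange.basis Finset.univ a j =
        C (Lagrange.nodalWeight Finset.univ a j) * Lagrange.nodal Finset.univ a := by
      rw [Lagrange.basis_eq_prod_sub_inv_mul_nodal_div (Finset.mem_univ j),
        ← Lagrange.nodal_erase_eq_nodal_div (Finset.mem_univ j),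
        Lagrange.nodal_eq_mul_nodal_erase (Finset.mem_univ j)]
      ring
    simpa [Lagrange.nodal, map_prod] using congrArg (aeval (x i)) hbasis
  refine ⟨fun σ => (∏ i, ℓ i (σ i)) • F, ?_, fun σ i => ?_⟩
  · rw [← Finset.sum_smul, ← Fintype.piFinset_univ, ← Finset.prod_univ_sum]
    simp [sum_basis]
  · rw [← sub_eq_zero, ← algebraMap_smul R (a (σ i)), ← sub_smul, smul_smul,
      ← Finset.mul_prod_erase _ _ (Finset.mem_univ i), ← mul_assoc, sub_mul_basis, mul_right_comm,
      mul_comm, mul_smul, smul_comm, h, smul_zero]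

end JointEigenvectors

section ExponentialSums

variable {ι : Type*} [Fintype ι] [DecidableEq ι]

theorem eq_smul_expFun_of_forall_dirDeriv_eq {F : analyticFunctions ℂ (ι → ℂ)} {c : ι → ℂ}
    (h : ∀ i, dirDeriv ℂ (Pi.single i 1) F = c i • F) : F = F.1 0 • expFun c := by
  have deriv_zero (i : ι) : dirDeriv ℂ (Pi.single i 1) (expFun (-c) * F) = 0 := by
    rw [Derivation.leibniz, h, dirDeriv_expFun, Pi.neg_apply, smul_eq_mul, smul_eq_mul,
      mul_smul_comm, mul_smul_comm, mul_comm F, ← add_smul, add_neg_cancel, zero_smul]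
  have fderiv_zero (x : ι → ℂ) : fderiv ℂ (expFun (-c) * F).1 x = 0 :=
    ContinuousLinearMap.coe_injective <| LinearMap.pi_ext' fun i => LinearMap.ext_ring <|
      congrFun (congrArg Subtype.val (deriv_zero i)) x
  ext b
  have hconst : (expFun (-c)).1 b * F.1 b = (expFun (-c)).1 0 * F.1 0 :=
    is_const_of_fderiv_eq_zero (𝕜 := ℂ) (differentiable_analyticFunctions _) fderiv_zero b 0
  change F.1 b = F.1 0 * (expFun c).1 b
  simp only [expFun_apply, Pi.neg_apply, mul_neg, Finset.sum_neg_distrib, Complex.exp_neg,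
    Pi.zero_apply, zero_mul, Finset.sum_const_zero, Complex.exp_zero, one_mul,
    neg_zero] at hconst ⊢
  rw [← hconst, inv_mul_eq_div, div_mul_cancel₀ _ (Complex.exp_ne_zero _)]

theorem exists_eq_sum_smul_expFun {a : ι → ℂ} (ha : a.Injective)
    {F : analyticFunctions ℂ (ι → ℂ)}
    (h : ∀ j, (∏ i : ι, (coordDerivOp i + algebraMap ℂ _ (-a j))) • F = 0) :
    ∃ C : (ι → ι) → ℂ, F = ∑ σ, C σ • expFun (a ∘ σ) := by
  have hprod := prod_sub_algebraMap_smul_eq_zero (R := constCoeffOps ℂ (ι → ℂ))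
    (x := coordDerivOp) ha (F := F) (by simpa only [map_neg, ← sub_eq_add_neg] using h)
  obtain ⟨G, hF, hG⟩ := exists_sum_joint_eigenvectors ha hprod
  refine ⟨fun σ => (G σ).1 0, hF.trans (Finset.sum_congr rfl fun σ _ => ?_)⟩
  exact eq_smul_expFun_of_forall_dirDeriv_eq (hG σ)

/-- The matrix `exp (a j * b k)` of the Harish-Chandra formula. -/
noncomputable def expMatrix (a b : ι → ℂ) : Matrix ι ι ℂ :=
  of fun j k => Complex.exp (a j * b k)

theorem det_expMatrix_comp (a b : ι → ℂ) (σ : ι → ι) :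
    (expMatrix (a ∘ σ) b).det =
      ((1 : Matrix ι ι ℂ).submatrix σ id).det * (expMatrix a b).det := by
  rw [← det_mul]
  congr 1
  ext i j
  simp [expMatrix, mul_apply, one_apply]

theorem sum_sign_mul_expFun_comp_perm (a b : ι → ℂ) :
    ∑ τ : Equiv.Perm ι, (τ.sign : ℂ) * (expFun a).1 (b ∘ τ) = (expMatrix a b).det := by
  rw [← det_transpose, det_apply']
  simp [expFun_apply, expMatrix, Complex.exp_sum, mul_comm]

theorem exists_eq_mul_det_expMatrix {a : ι → ℂ} (ha : a.Injective)
    {F : analyticFunctions ℂ (ι → ℂ)}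
    (h : ∀ j, (∏ i : ι, (coordDerivOp i + algebraMap ℂ _ (-a j))) • F = 0)
    (hsymm : ∀ (τ : Equiv.Perm ι) (b : ι → ℂ), F.1 (b ∘ τ) = τ.sign * F.1 b) :
    ∃ C : ℂ, ∀ b, F.1 b = C * (expMatrix a b).det := by
  obtain ⟨C, hF⟩ := exists_eq_sum_smul_expFun ha h
  have hF_apply (b : ι → ℂ) : F.1 b = ∑ σ, C σ * (expFun (a ∘ σ)).1 b := by
    rw [hF, AddSubmonoidClass.coe_finsetSum, Finset.sum_apply]
    rfl
  have hcard : (Fintype.card (Equiv.Perm ι) : ℂ) ≠ 0 := Nat.cast_ne_zero.2 Fintype.card_ne_zero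
  have antisymmetrize (b : ι → ℂ) : (Fintype.card (Equiv.Perm ι) : ℂ) * F.1 b =
      ∑ τ : Equiv.Perm ι, (τ.sign : ℂ) * F.1 (b ∘ τ) := by
    simp [hsymm, ← mul_assoc, ← Int.cast_mul, ← Units.val_mul]
  refine ⟨(Fintype.card (Equiv.Perm ι) : ℂ)⁻¹ *
    ∑ σ, C σ * ((1 : Matrix ι ι ℂ).submatrix σ id).det, fun b => ?_⟩
  rw [mul_assoc, eq_inv_mul_iff_mul_eq₀ hcard, antisymmetrize]
  simp only [hF_apply, Finset.mul_sum, Finset.sum_mul]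
  rw [Finset.sum_comm]
  refine Finset.sum_congr rfl fun σ _ => ?_
  rw [mul_assoc, ← det_expMatrix_comp, ← sum_sign_mul_expFun_comp_perm, Finset.mul_sum]
  exact Finset.sum_congr rfl fun τ _ => mul_left_comm _ _ _

end ExponentialSums

section PermutationSymmetry

theorem map_permMatrix {ι R S : Type*} [DecidableEq ι] [Semiring R] [Semiring S] (f : R →+* S)
    (τ : Equiv.Perm ι) : (τ.permMatrix R).map f = τ.permMatrix S := by
  ext i j
  simp [PEquiv.toMatrix_apply, apply_ite f]

theorem permMatrix_mem_unitaryGroup {ι : Type*} [Fintype ι] [DecidableEq ι] (R : Type*)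
    [CommRing R] [StarRing R] (τ : Equiv.Perm ι) : τ.permMatrix R ∈ unitaryGroup ι R := by
  rw [mem_unitaryGroup_iff, star_eq_conjTranspose, conjTranspose_permMatrix, ← permMatrix_mul,
    inv_mul_cancel, permMatrix_one]

variable {ι 𝔸 : Type*} [Fintype ι] [DecidableEq ι] [NormedCommRing 𝔸] [NormedAlgebra ℂ 𝔸]
  [CompleteSpace 𝔸] {Λ : 𝔸 →L[ℂ] ℂ} {M : Matrix ι ι 𝔸}

theorem IsUnitarilyInvariant.laplace_one_comp_perm (hM : IsUnitarilyInvariant Λ M)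
    (τ : Equiv.Perm ι) (b : ι → ℂ) :
    (laplace Λ M.diag 1).1 (b ∘ τ) = (laplace Λ M.diag 1).1 b := by
  let +nondep : NormedAlgebra ℚ 𝔸 := .restrictScalars ℚ ℂ 𝔸
  obtain ⟨α, hα, hαM⟩ := hM _ (permMatrix_mem_unitaryGroup ℂ τ⁻¹)
  have map_diag (i : ι) : α (M.diag (τ i)) = M.diag i := by
    have h := congrFun₂ hαM (τ i) (τ i)
    rw [conjTranspose_permMatrix, map_permMatrix, map_permMatrix] at h
    simpa [PEquiv.toMatrix_toPEquiv_mul, PEquiv.mul_toMatrix_toPEquiv] using h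
  have map_sum_diag : α (∑ i, b i • M.diag i) = ∑ i, (b ∘ τ) i • M.diag i := by
    rw [← Equiv.sum_comp τ]
    simp only [map_sum, map_smul, map_diag, Function.comp_apply]
  simp only [laplace_apply, one_mul]
  rw [← map_sum_diag, ← NormedSpace.map_exp α α.continuous, hα]

end PermutationSymmetry

section Normalization

theorem det_vandermonde_smul {R : Type*} [CommRing R] {d : ℕ} (z : R) (b : Fin d → R) :
    (vandermonde (z • b)).det = z ^ ((d ^ 2 - d) / 2) * (vandermonde b).det := by
  have factor : vandermonde (z • b) = vandermonde b * diagonal fun k : Fin d => z ^ (k : ℕ) := by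
    ext i k
    simp [vandermonde_apply, mul_pow, mul_comm]
  rw [factor, det_mul, det_diagonal, Finset.prod_pow_eq_pow_sum,
    Fin.sum_univ_eq_sum_range (fun k => k), Finset.sum_range_id, mul_comm, sq, Nat.mul_sub_one]

theorem det_vandermonde_natCast (R : Type*) [CommRing R] (d : ℕ) :
    (vandermonde fun i : Fin d => (i : R)).det = ∏ j ∈ Finset.range d, (j.factorial : R) := by
  cases d with
  | zero => simp
  | succ n =>
    rw [det_vandermonde_id_eq_superFactorial, ← Nat.prod_range_factorial_succ,
      Finset.prod_range_succ', Nat.factorial_zero, Nat.cast_one, mul_one, Nat.cast_prod]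

variable {d : ℕ} (a : Fin d → ℂ)

theorem expMatrix_smul_natCast (ε : ℂ) :
    expMatrix a (ε • fun k : Fin d => (k : ℂ)) =
      vandermonde fun j => Complex.exp (ε * a j) := by
  ext j k
  rw [expMatrix, of_apply, vandermonde_apply, ← Complex.exp_nat_mul, Pi.smul_apply, smul_eq_mul]
  ring_nf

theorem tendsto_inv_pow_mul_det_expMatrix :
    Filter.Tendsto
      (fun ε : ℂ => ε⁻¹ ^ ((d ^ 2 - d) / 2) * (expMatrix a (ε • fun k : Fin d => (k : ℂ))).det)
      (nhdsWithin 0 {0}ᶜ) (nhds (vandermonde a).det) := by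
  have difference_quotient (ε : ℂ) : ε⁻¹ ^ ((d ^ 2 - d) / 2) *
      (expMatrix a (ε • fun k : Fin d => (k : ℂ))).det =
        (vandermonde fun j => ε⁻¹ • (Complex.exp (ε * a j) - 1)).det := by
    rw [expMatrix_smul_natCast, ← det_vandermonde_sub _ 1, ← det_vandermonde_smul]
    rfl
  have continuous_det : Continuous fun v : Fin d → ℂ => (vandermonde v).det := by
    simp only [det_vandermonde]
    fun_prop
  simp only [difference_quotient]
  refine (continuous_det.tendsto a).comp (tendsto_pi_nhds.2 fun j => ?_)
  have hasDerivAt_exp : HasDerivAt (fun ε : ℂ => Complex.exp (ε * a j)) (a j) 0 := by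
    simpa using ((hasDerivAt_id (0 : ℂ)).mul_const (a j)).cexp
  simpa using hasDerivAt_exp.tendsto_slope_zero

theorem mul_det_vandermonde_eq_prod_factorial {f : (Fin d → ℂ) → ℂ} (hf : Continuous f) {C : ℂ}
    (h : ∀ b, (vandermonde b).det * f b = C * (expMatrix a b).det) :
    C * (vandermonde a).det = (∏ j ∈ Finset.range d, (j.factorial : ℂ)) * f 0 := by
  let ν : Fin d → ℂ := fun k => k
  have hlim : Filter.Tendsto (fun ε : ℂ => (vandermonde ν).det * f (ε • ν))
      (nhdsWithin 0 {0}ᶜ) (nhds ((vandermonde ν).det * f 0)) := by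
    have hcont : Continuous fun ε : ℂ => (vandermonde ν).det * f (ε • ν) := by fun_prop
    simpa using (hcont.tendsto 0).mono_left nhdsWithin_le_nhds
  rw [← det_vandermonde_natCast]
  refine tendsto_nhds_unique ((tendsto_inv_pow_mul_det_expMatrix a).const_mul C) (hlim.congr' ?_)
  filter_upwards [self_mem_nhdsWithin] with ε hε
  rw [mul_left_comm, ← h, det_vandermonde_smul, mul_assoc, inv_pow,
    inv_mul_cancel_left₀ (pow_ne_zero _ hε)]

end Normalization

section MainIdentity

variable {d : ℕ} {𝔸 : Type*} [NormedCommRing 𝔸] [NormedAlgebra ℂ 𝔸] [CompleteSpace 𝔸]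
  {Λ : 𝔸 →L[ℂ] ℂ} {M : Matrix (Fin d) (Fin d) 𝔸}

theorem vandermondeFun_id_mul_apply (F : analyticFunctions ℂ (Fin d → ℂ)) (b : Fin d → ℂ) :
    (vandermondeFun id * F).1 b = (vandermonde b).det * F.1 b := rfl

theorem IsUnitarilyInvariant.det_vandermonde_mul_laplace (hM : IsUnitarilyInvariant Λ M)
    {a : Fin d → ℂ} (ha : a.Injective)
    (hroot : ∀ j, M.charpoly.IsRoot (algebraMap ℂ 𝔸 (a j))) (b : Fin d → ℂ) :
    (vandermonde a).det * (vandermonde b).det * (laplace Λ M.diag 1).1 b =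
      (∏ j ∈ Finset.range d, (j.factorial : ℂ)) * Λ 1 * (expMatrix a b).det := by
  have annihilated (j : Fin d) : (∏ i : Fin d, (coordDerivOp i + algebraMap ℂ _ (-a j))) •
      (vandermondeFun id * laplace Λ M.diag 1) = 0 := by
    have det_eq_zero : (M + scalar (Fin d) (algebraMap ℂ 𝔸 (-a j))).det = 0 := by
      rw [map_neg, map_neg, ← sub_eq_add_neg, ← neg_sub, det_neg, ← eval_charpoly, hroot, mul_zero]
    have h := hM.prod_coordDerivOp_add_smul_vandermondeFun_mul_laplace_one (-a j)
      Function.injective_id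
    rwa [submatrix_id_id, det_eq_zero, map_zero, mul_zero] at h
  have alternating (τ : Equiv.Perm (Fin d)) (b : Fin d → ℂ) :
      (vandermondeFun id * laplace Λ M.diag 1).1 (b ∘ τ) =
        (τ.sign : ℂ) * (vandermondeFun id * laplace Λ M.diag 1).1 b := by
    rw [vandermondeFun_id_mul_apply, vandermondeFun_id_mul_apply, hM.laplace_one_comp_perm,
      ← mul_assoc, ← det_permute]
    rfl
  obtain ⟨C, hC⟩ := exists_eq_mul_det_expMatrix ha annihilated alternating
  have normalization := mul_det_vandermonde_eq_prod_factorial a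
    (contDiff_analyticFunctions (laplace Λ M.diag 1)).continuous hC
  have laplace_zero : (laplace Λ M.diag 1).1 0 = Λ 1 := by simp [laplace_apply]
  rw [mul_assoc, ← vandermondeFun_id_mul_apply, hC, ← laplace_zero, ← normalization]
  ring

end MainIdentity

section IntegrationOverUnitaryGroup

instance (ι 𝕜 : Type*) [Fintype ι] [DecidableEq ι] [RCLike 𝕜] :
    CompactSpace (unitaryGroup ι 𝕜) := by
  refine isCompact_iff_compactSpace.1 (IsCompact.of_isClosed_subset
    (isCompact_univ_pi fun _ => isCompact_univ_pi fun _ => isCompact_closedBall (0 : 𝕜) 1)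
    isClosed_unitary fun U hU i _ j _ => ?_)
  rw [mem_closedBall_zero_iff]
  exact entry_norm_bound_of_unitary hU i j

-- A shortcut: the search otherwise runs through the C⋆-algebra instances and times out.
noncomputable local instance {X : Type*} [TopologicalSpace X] [CompactSpace X] :
    NormedAlgebra ℂ C(X, ℂ) :=
  inferInstance

/-- Integration against a finite measure on a compact space, as a continuous functional. -/
noncomputable def integralFunctional {X : Type*} [TopologicalSpace X] [CompactSpace X]
    [MeasurableSpace X] [BorelSpace X] (μ : Measure X) [IsFiniteMeasure μ] : C(X, ℂ) →L[ℂ] ℂ :=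
  (L1.integralCLM' ℂ).comp (ContinuousMap.toLp 1 μ ℂ)

theorem integralFunctional_apply {X : Type*} [TopologicalSpace X] [CompactSpace X]
    [MeasurableSpace X] [BorelSpace X] (μ : Measure X) [IsFiniteMeasure μ] (f : C(X, ℂ)) :
    integralFunctional μ f = ∫ x, f x ∂μ := by
  rw [integralFunctional, ContinuousLinearMap.comp_apply, ← L1.integral_eq',
    L1.integral_eq_integral]
  exact integral_congr_ae (ContinuousMap.coeFn_toLp μ f)

theorem continuousMap_exp_apply {X : Type*} [TopologicalSpace X] [CompactSpace X] (f : C(X, ℂ))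
    (x : X) : NormedSpace.exp f x = Complex.exp (f x) := by
  let +nondep : NormedAlgebra ℚ C(X, ℂ) := .restrictScalars ℚ ℂ C(X, ℂ)
  rw [Complex.exp_eq_exp_ℂ]
  exact NormedSpace.map_exp (ContinuousMap.evalStarAlgHom ℂ ℂ x) (continuous_eval_const x) f

variable {ι : Type*} [Fintype ι] [DecidableEq ι]

/-- The matrix `U A Uᴴ` with entries regarded as continuous functions of the unitary matrix `U`. -/
def unitaryConj (A : Matrix ι ι ℂ) : Matrix ι ι C(unitaryGroup ι ℂ, ℂ) :=
  of fun i j => ⟨fun U => (U.1 * A * U.1ᴴ) i j, by fun_prop⟩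

theorem unitaryConj_map_eval (A : Matrix ι ι ℂ) (U : unitaryGroup ι ℂ) :
    (unitaryConj A).map (ContinuousMap.evalAlgHom ℂ ℂ U : _ →+* ℂ) = U.1 * A * U.1ᴴ := rfl

theorem isRoot_charpoly_unitaryConj {A : Matrix ι ι ℂ} {c : ℂ} (hc : c ∈ spectrum ℂ A) :
    (unitaryConj A).charpoly.IsRoot (algebraMap ℂ _ c) := by
  ext U
  let evalU : C(unitaryGroup ι ℂ, ℂ) →+* ℂ := ContinuousMap.evalAlgHom ℂ ℂ U
  have charpoly_map_eval : (unitaryConj A).charpoly.map evalU = A.charpoly := by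
    rw [← charpoly_map, unitaryConj_map_eval, charpoly_mul_comm, ← mul_assoc,
      ← star_eq_conjTranspose, UnitaryGroup.star_mul_self, one_mul]
  calc evalU ((unitaryConj A).charpoly.eval (algebraMap ℂ _ c))
      = ((unitaryConj A).charpoly.map evalU).eval (evalU (algebraMap ℂ _ c)) :=
        (Polynomial.eval_map_apply _ _).symm
    _ = A.charpoly.eval c := by rw [charpoly_map_eval]; rfl
    _ = 0 := mem_spectrum_iff_isRoot_charpoly.1 hc

variable [MeasurableSpace (unitaryGroup ι ℂ)] [BorelSpace (unitaryGroup ι ℂ)]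
  (μ : Measure (unitaryGroup ι ℂ))

theorem isUnitarilyInvariant_unitaryConj [IsFiniteMeasure μ] [μ.IsMulLeftInvariant]
    (A : Matrix ι ι ℂ) :
    IsUnitarilyInvariant (integralFunctional μ) (unitaryConj A) := by
  intro W hW
  let translate : C(unitaryGroup ι ℂ, unitaryGroup ι ℂ) := .mulLeft ⟨W, hW⟩
  refine ⟨⟨ContinuousMap.compRightAlgHom ℂ ℂ translate,
    ContinuousMap.compRightAlgHom_continuous ℂ ℂ translate⟩, fun f => ?_, ?_⟩
  · simp only [integralFunctional_apply]
    exact integral_mul_left_eq_self f _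
  · ext i j U
    let evalU : C(unitaryGroup ι ℂ, ℂ) →+* ℂ := ContinuousMap.evalAlgHom ℂ ℂ U
    have map_eval : (W.map (algebraMap ℂ C(unitaryGroup ι ℂ, ℂ)) * unitaryConj A *
        Wᴴ.map (algebraMap ℂ C(unitaryGroup ι ℂ, ℂ))).map evalU =
          (W * U.1) * A * (W * U.1)ᴴ := by
      rw [Matrix.map_mul, Matrix.map_mul, unitaryConj_map_eval]
      change W * (U.1 * A * U.1ᴴ) * Wᴴ = W * U.1 * A * (W * U.1)ᴴ
      simp only [conjTranspose_mul, mul_assoc]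
    exact (congrFun₂ map_eval i j).symm

theorem laplace_integralFunctional_unitaryConj [IsFiniteMeasure μ] (A : Matrix ι ι ℂ)
    (b : ι → ℂ) :
    (laplace (integralFunctional μ) (unitaryConj A).diag 1).1 b =
      ∫ U : unitaryGroup ι ℂ, Complex.exp (A * U.1ᴴ * diagonal b * U.1).trace ∂μ := by
  rw [laplace_apply, one_mul, integralFunctional_apply]
  refine integral_congr_ae (.of_forall fun U => ?_)
  dsimp only
  rw [continuousMap_exp_apply, trace_mul_comm, ← mul_assoc, ← mul_assoc, trace]
  simp [unitaryConj, ContinuousMap.sum_apply, mul_comm]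

theorem integral_exp_trace_unitary_conj [μ.IsMulLeftInvariant] (A D : Matrix ι ι ℂ)
    (W : unitaryGroup ι ℂ) :
    ∫ U : unitaryGroup ι ℂ, Complex.exp (A * U.1ᴴ * (W.1 * D * W.1ᴴ) * U.1).trace ∂μ =
      ∫ U : unitaryGroup ι ℂ, Complex.exp (A * U.1ᴴ * D * U.1).trace ∂μ := by
  rw [← integral_mul_left_eq_self _ W]
  refine integral_congr_ae (.of_forall fun U => ?_)
  have hW : W.1ᴴ * W.1 = 1 := mem_unitaryGroup_iff'.1 W.2
  dsimp only
  rw [UnitaryGroup.mul_val, conjTranspose_mul]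
  congr 2
  calc A * (U.1ᴴ * W.1ᴴ) * (W.1 * D * W.1ᴴ) * (W.1 * U.1)
      = A * U.1ᴴ * (W.1ᴴ * W.1) * D * (W.1ᴴ * W.1) * U.1 := by simp only [mul_assoc]
    _ = A * U.1ᴴ * D * U.1 := by rw [hW, mul_one, mul_one]

theorem det_vandermonde_mul_integral_exp_trace {d : ℕ}
    [MeasurableSpace (unitaryGroup (Fin d) ℂ)] [BorelSpace (unitaryGroup (Fin d) ℂ)]
    (μ : Measure (unitaryGroup (Fin d) ℂ)) [IsProbabilityMeasure μ] [μ.IsMulLeftInvariant]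
    {A : Matrix (Fin d) (Fin d) ℂ} {a : Fin d → ℂ} (ha : a.Injective)
    (hA : ∀ j, a j ∈ spectrum ℂ A) (b : Fin d → ℂ) :
    (vandermonde a).det * (vandermonde b).det *
        ∫ U : unitaryGroup (Fin d) ℂ, Complex.exp (A * U.1ᴴ * diagonal b * U.1).trace ∂μ =
      (∏ j ∈ Finset.range d, (j.factorial : ℂ)) * (expMatrix a b).det := by
  have integral_one : integralFunctional μ 1 = 1 := by simp [integralFunctional_apply]
  have h := (isUnitarilyInvariant_unitaryConj μ A).det_vandermonde_mul_laplace ha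
    (fun j => isRoot_charpoly_unitaryConj (hA j)) b
  rwa [laplace_integralFunctional_unitaryConj, integral_one, mul_one] at h

end IntegrationOverUnitaryGroup

theorem mem_spectrum_unitary_conj_diagonal {ι : Type*} [Fintype ι] [DecidableEq ι]
    (W : unitaryGroup ι ℂ) (a : ι → ℂ) (j : ι) : a j ∈ spectrum ℂ (W.1 * diagonal a * W.1ᴴ) := by
  rw [← star_eq_conjTranspose, Unitary.spectrum_star_right_conjugate, spectrum_diagonal]
  exact ⟨j, rfl⟩

theorem vandermondeProd_eq_det_vandermonde {d : ℕ} (a : Fin d → ℂ) :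
    vandermondeProd a = (vandermonde a).det := by
  rw [det_vandermonde, vandermondeProd, Finset.prod_filter, Fintype.prod_prod_type,
    Finset.prod_comm]
  refine Finset.prod_congr rfl fun i _ => ?_
  rw [← Finset.prod_filter]
  refine Finset.prod_congr ?_ fun _ _ => rfl
  ext j
  simp

theorem harish_chandra_itzykson_zuber_general (d : ℕ) (z : ℂ) (hz : z ≠ 0)
    [MeasurableSpace (unitaryGroup (Fin d) ℂ)] [BorelSpace (unitaryGroup (Fin d) ℂ)]
    (μ : Measure (unitaryGroup (Fin d) ℂ)) [IsProbabilityMeasure μ] [μ.IsMulLeftInvariant]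
    (A B : Matrix (Fin d) (Fin d) ℂ) (a b : Fin d → ℂ)
    (ha : Function.Injective a) (hb : Function.Injective b)
    (hA : ∀ j, a j ∈ spectrum ℂ A)
    (hB : ∃ W : unitaryGroup (Fin d) ℂ, B = W.1 * diagonal b * W.1ᴴ) :
    ∫ U : unitaryGroup (Fin d) ℂ, Complex.exp (z * (A * U.1ᴴ * B * U.1).trace) ∂μ =
      (∏ j ∈ Finset.range d, (j.factorial : ℂ)) *
          (of fun j k : Fin d => Complex.exp (z * a j * b k)).det /
        (z ^ ((d ^ 2 - d) / 2) * vandermondeProd a * vandermondeProd b) := by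
  obtain ⟨W, rfl⟩ := hB
  have integral_eq :
      ∫ U : unitaryGroup (Fin d) ℂ,
          Complex.exp (z * (A * U.1ᴴ * (W.1 * diagonal b * W.1ᴴ) * U.1).trace) ∂μ =
        ∫ U : unitaryGroup (Fin d) ℂ,
          Complex.exp (A * U.1ᴴ * diagonal (z • b) * U.1).trace ∂μ := by
    rw [← integral_exp_trace_unitary_conj μ A _ W]
    simp only [diagonal_smul, mul_smul_comm, smul_mul_assoc, trace_smul, smul_eq_mul]
  have expMatrix_smul : expMatrix a (z • b) = of fun j k => Complex.exp (z * a j * b k) := by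
    ext j k
    simp [expMatrix, mul_left_comm, mul_assoc]
  have denominator_ne_zero :
      z ^ ((d ^ 2 - d) / 2) * (vandermonde a).det * (vandermonde b).det ≠ 0 :=
    mul_ne_zero (mul_ne_zero (pow_ne_zero _ hz) (det_vandermonde_ne_zero_iff.2 ha))
      (det_vandermonde_ne_zero_iff.2 hb)
  rw [vandermondeProd_eq_det_vandermonde, vandermondeProd_eq_det_vandermonde, integral_eq,
    eq_div_iff denominator_ne_zero, ← expMatrix_smul,
    ← det_vandermonde_mul_integral_exp_trace μ ha hA, det_vandermonde_smul]
  ring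

/-- Harish-Chandra/Itzykson–Zuber formula.  Let `d ≥ 1`, `z ∈ ℂ`, `z ≠ 0`,
let `μ` be the normalized Haar (probability) measure on the unitary group `U(d)` (formalized
as a Borel probability measure invariant under left translations, which characterizes it
uniquely), and let `A`, `B` be normal `d × d` complex matrices with pairwise distinct
eigenvalues `a₁,…,a_d` resp. `b₁,…,b_d` (normality with the given eigenvalues being
formalized by a unitary diagonalization).  Then
`∫_{U(d)} exp(z·tr(A U* B U)) dμ(U)
  = (∏_{j=1}^{d-1} j!) · det(exp(z·a_j·b_k))_{j,k} / (z^{(d²-d)/2}·Δ(A)·Δ(B))`. -/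
theorem harish_chandra_itzykson_zuber (d : ℕ) (hd : 1 ≤ d) (z : ℂ) (hz : z ≠ 0)
    [MeasurableSpace (Matrix.unitaryGroup (Fin d) ℂ)]
    [BorelSpace (Matrix.unitaryGroup (Fin d) ℂ)]
    (μ : Measure (Matrix.unitaryGroup (Fin d) ℂ)) [IsProbabilityMeasure μ]
    (hμ : ∀ W : Matrix.unitaryGroup (Fin d) ℂ,
      Measure.map (fun U : Matrix.unitaryGroup (Fin d) ℂ => W * U) μ = μ)
    (A B : Matrix (Fin d) (Fin d) ℂ) (a b : Fin d → ℂ)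
    (ha : Function.Injective a) (hb : Function.Injective b)
    (hA : ∃ W : Matrix.unitaryGroup (Fin d) ℂ,
      A = (W : Matrix (Fin d) (Fin d) ℂ) * Matrix.diagonal a * (W : Matrix (Fin d) (Fin d) ℂ)ᴴ)
    (hB : ∃ W : Matrix.unitaryGroup (Fin d) ℂ,
      B = (W : Matrix (Fin d) (Fin d) ℂ) * Matrix.diagonal b *
        (W : Matrix (Fin d) (Fin d) ℂ)ᴴ) :
    ∫ U : Matrix.unitaryGroup (Fin d) ℂ,
        Complex.exp (z * (A * (U : Matrix (Fin d) (Fin d) ℂ)ᴴ * B *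
          (U : Matrix (Fin d) (Fin d) ℂ)).trace) ∂μ
      = (∏ j ∈ Finset.range d, (Nat.factorial j : ℂ)) *
          (Matrix.of fun j k : Fin d => Complex.exp (z * a j * b k)).det /
          (z ^ ((d ^ 2 - d) / 2) * vandermondeProd a * vandermondeProd b) := by
  have : μ.IsMulLeftInvariant := ⟨hμ⟩
  obtain ⟨W, rfl⟩ := hA
  exact harish_chandra_itzykson_zuber_general d z hz μ _ B a b ha hb
    (mem_spectrum_unitary_conj_diagonal W a) hB
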